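/- arXiv:2004.14197 — 3 statements merged into one kernel-verified Lean document; each statement's English description precedes it below -/
import Mathlib

section
/- Let R be a commutative ℚ-algebra, F a formal group law over R, and suppose L ∈ R⟦x⟧ satisfies L(x) ≡ x mod x² and L(F(x,y)) = L(x) + L(y) (so L is the logarithm of F). Then the diagonal substitution of the associated power series q satisfies q(x,x) = L′(x), the formal derivative of the logarithm. -/
noncomputable section
open MvPowerSeries

variable {k : Type*} [CommRing k]

/-- Substitution of a family of power series (each with zero constant term) into a
multivariate power series, via the standard coefficient formula. -/
def psSubst {σ τ : Type*} [Fintype σ] [DecidableEq σ]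
    (a : σ → MvPowerSeries τ k) (f : MvPowerSeries σ k) : MvPowerSeries τ k :=
  fun e => ∑ d ∈ Finset.Iic (Finsupp.equivFunOnFinite.symm fun _ : σ => e.sum fun _ m => m),
    (MvPowerSeries.coeff d f) * MvPowerSeries.coeff e (∏ i, a i ^ d i)

/-- The automorphism of `k⟦x,y⟧` exchanging the two variables. -/
def swapPS (f : MvPowerSeries (Fin 2) k) : MvPowerSeries (Fin 2) k :=
  fun d => MvPowerSeries.coeff (Finsupp.equivMapDomain (Equiv.swap 0 1) d) f

/-- A formal group law over `k`. -/
def IsFormalGroupLaw (F : MvPowerSeries (Fin 2) k) : Prop :=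
  swapPS F = F ∧
  psSubst ![X 0, 0] F = (X 0 : MvPowerSeries (Fin 2) k) ∧
  psSubst ![0, X 1] F = (X 1 : MvPowerSeries (Fin 2) k) ∧
  psSubst ![psSubst ![(X 0 : MvPowerSeries (Fin 3) k), X 1] F, X 2] F =
    psSubst ![(X 0 : MvPowerSeries (Fin 3) k), psSubst ![(X 1 : MvPowerSeries (Fin 3) k), X 2] F] F

/-- The formal difference `x [-1] y = F(x, ι(y)) ∈ k⟦x,y⟧`, where `ι` is the formal inverse. -/
def formalDiff (F : MvPowerSeries (Fin 2) k) (ι : PowerSeries k) : MvPowerSeries (Fin 2) k :=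
  psSubst ![X 0, psSubst (fun _ : Unit => (X 1 : MvPowerSeries (Fin 2) k)) ι] F


theorem psSubst_eq_subst {R : Type*} [CommRing R] {σ τ : Type*} [Fintype σ] [DecidableEq σ]
    (a : σ → MvPowerSeries τ R) (ha : ∀ i, MvPowerSeries.constantCoeff (a i) = 0)
    (f : MvPowerSeries σ R) : psSubst a f = MvPowerSeries.subst a f := by
  have hs : HasSubst a := hasSubst_of_constantCoeff_zero ha
  ext e
  rw [coeff_subst hs]
  rw [finsum_eq_sum_of_support_subset
    (s := Finset.Iic (Finsupp.equivFunOnFinite.symm fun _ : σ => e.sum fun _ m => m))]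
  · change psSubst a f e = _
    unfold psSubst
    refine Finset.sum_congr rfl fun d _ => ?_
    rw [smul_eq_mul, Finsupp.prod_fintype _ _ (by simp)]
  · intro d hd
    rw [Finset.mem_coe, Finset.mem_Iic]
    intro i
    by_contra hlt
    apply hd
    change coeff d f • coeff e (d.prod fun s n => a s ^ n) = 0
    rw [Finsupp.prod_fintype _ _ (by simp)]
    have : coeff e (∏ i, a i ^ d i) = 0 := by
      apply coeff_of_lt_order
      rw [← Finset.mul_prod_erase _ _ (Finset.mem_univ i)]
      refine lt_of_lt_of_le ?_ (le_order_mul)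
      refine lt_of_lt_of_le ?_ (le_add_right (le_order_pow_of_constantCoeff_eq_zero (d i) (ha i)))
      have h2 : e.sum (fun _ m => m) < d i := by simpa using hlt
      have h3 : Finsupp.degree e < d i := h2
      exact_mod_cast h3
    rw [this, smul_zero]

/-- exponent `(i,j)` -/
def ex2 (i j : ℕ) : Fin 2 →₀ ℕ := Finsupp.single 0 i + Finsupp.single 1 j

theorem ex2_zero (i j : ℕ) : ex2 i j 0 = i := by simp [ex2]
theorem ex2_one (i j : ℕ) : ex2 i j 1 = j := by simp [ex2]

theorem ex2_self (d : Fin 2 →₀ ℕ) : ex2 (d 0) (d 1) = d := by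
  ext i; fin_cases i <;> simp [ex2]

theorem ex2_degree (i j : ℕ) : ((ex2 i j).sum fun _ m => m) = i + j := by
  rw [Finsupp.sum_fintype _ _ (by simp), Fin.sum_univ_two, ex2_zero, ex2_one]

theorem coeff_psSubst_X {R : Type*} [CommRing R] (L : PowerSeries R) (s : Fin 2) (i j : ℕ) :
    coeff (ex2 i j) (psSubst (fun _ : Unit => (X s : MvPowerSeries (Fin 2) R)) L)
      = if ex2 i j = Finsupp.single s (i + j) then PowerSeries.coeff (i + j) L else 0 := by
  change psSubst _ L (ex2 i j) = _
  unfold psSubst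
  rw [ex2_degree]
  rw [Finset.sum_eq_single (Finsupp.single () (i + j))]
  · simp only [Finset.univ_unique, Finset.prod_singleton, coeff_X_pow]
    simp [PowerSeries.coeff]
  · intro d _ hd
    simp only [Finset.univ_unique, Finset.prod_singleton, coeff_X_pow]
    rw [if_neg, mul_zero]
    intro h
    apply hd
    have := ex2_degree i j
    rw [h, Finsupp.sum_single_index rfl] at this
    ext
    simpa using this
  · intro h
    exfalso; apply h
    rw [Finset.mem_Iic]
    intro x
    simp

theorem coeff_quot {R : Type*} [CommRing R] (L : PowerSeries R) (P : MvPowerSeries (Fin 2) R)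
    (h : (X 0 - X 1) * P = psSubst (fun _ : Unit => (X 0 : MvPowerSeries (Fin 2) R)) L -
        psSubst (fun _ : Unit => (X 1 : MvPowerSeries (Fin 2) R)) L) (j : ℕ) :
    ∀ i, coeff (ex2 i j) P = PowerSeries.coeff (i + j + 1) L := by
  have key : ∀ i j, coeff (ex2 (i+1) j) (X 0 * P) = coeff (ex2 i j) P := by
    intro i j
    have : ex2 (i+1) j = Finsupp.single 0 1 + ex2 i j := by
      ext k; fin_cases k <;> simp [ex2, add_comm]
    rw [this, X, coeff_add_monomial_mul, one_mul]
  have key1 : ∀ i j, coeff (ex2 i (j+1)) (X 1 * P) = coeff (ex2 i j) P := by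
    intro i j
    have : ex2 i (j+1) = Finsupp.single 1 1 + ex2 i j := by
      ext k; fin_cases k <;> simp [ex2, add_comm]
    rw [this, X, coeff_add_monomial_mul, one_mul]
  induction j with
  | zero =>
    intro i
    have := congrArg (coeff (ex2 (i+1) 0)) h
    rw [sub_mul, map_sub, map_sub, key, coeff_psSubst_X, coeff_psSubst_X, if_pos, if_neg,
      X, coeff_monomial_mul, if_neg] at this
    · simpa using this
    · intro h; have := h 1; simp [ex2] at this
    · intro h; have := DFunLike.congr_fun h 0; simp [ex2] at this
    · simp [ex2]
  | succ j ih =>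
    intro i
    have := congrArg (coeff (ex2 (i+1) (j+1))) h
    rw [sub_mul, map_sub, map_sub, key, key1, coeff_psSubst_X, coeff_psSubst_X, if_neg, if_neg,
      ih, sub_zero, sub_eq_zero] at this
    · rw [this]; congr 2; ring
    · intro h; have := DFunLike.congr_fun h 0; simp [ex2] at this
    · intro h; have := DFunLike.congr_fun h 1; simp [ex2] at this

theorem diag_quot {R : Type*} [CommRing R] (L : PowerSeries R) (P : MvPowerSeries (Fin 2) R)
    (h : ∀ i j, coeff (ex2 i j) P = PowerSeries.coeff (i + j + 1) L) :
    psSubst ![(PowerSeries.X : PowerSeries R), PowerSeries.X] P =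
      PowerSeries.derivativeFun L := by
  refine PowerSeries.ext fun n => ?_
  have hder : PowerSeries.coeff n (PowerSeries.derivativeFun L) =
      PowerSeries.coeff (n + 1) L * (n + 1) := PowerSeries.coeff_derivative L n
  rw [hder]
  change psSubst _ P (Finsupp.single () n) = _
  unfold psSubst
  have h1 : ∀ d : Fin 2 →₀ ℕ, coeff d P * coeff (Finsupp.single () n)
      (∏ i, (![(PowerSeries.X : PowerSeries R), PowerSeries.X] i) ^ d i) =
      if d 0 + d 1 = n then PowerSeries.coeff (n + 1) L else 0 := by
    intro d
    have h2 : coeff (Finsupp.single () n)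
      (∏ i, (![(PowerSeries.X : PowerSeries R), PowerSeries.X] i) ^ d i) =
      PowerSeries.coeff n ((PowerSeries.X : PowerSeries R) ^ (d 0 + d 1)) := by
      rw [Fin.prod_univ_two, pow_add]; rfl
    rw [h2, PowerSeries.coeff_X_pow, ← ex2_self d, h, ex2_zero, ex2_one]
    by_cases hn : d 0 + d 1 = n
    · simp [hn]
    · simp [hn, Ne.symm hn]
  rw [Finset.sum_congr rfl fun d _ => h1 d, Finsupp.sum_single_index rfl, ← Finset.sum_filter,
    Finset.sum_const]
  have h3 : (Finset.filter (fun d : Fin 2 →₀ ℕ => d 0 + d 1 = n)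
      (Finset.Iic (Finsupp.equivFunOnFinite.symm fun _ : Fin 2 => n))).card = n + 1 := by
    rw [← Finset.Nat.card_antidiagonal n]
    refine Finset.card_nbij' (fun d => (d 0, d 1)) (fun p => ex2 p.1 p.2) ?_ ?_ ?_ ?_
    · intro d hd; simpa using (Finset.mem_filter.1 hd).2
    · intro p hp
      have hp : p.1 + p.2 = n := by simpa using hp
      simp only [Finset.coe_filter, Set.mem_setOf_eq, Finset.mem_Iic, ex2_zero, ex2_one]
      refine ⟨fun i => ?_, hp⟩
      fin_cases i
      · simp [ex2]; omega
      · simp [ex2]; omega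
    · intro d _; exact ex2_self d
    · intro p _; simp [ex2_zero, ex2_one]
  rw [h3, nsmul_eq_mul, mul_comm]; push_cast; rfl

theorem stmt3 {R : Type*} [CommRing R] [Algebra ℚ R]
    (F : MvPowerSeries (Fin 2) R) (hF : IsFormalGroupLaw F)
    (ι : PowerSeries R) (hι0 : PowerSeries.constantCoeff ι = 0)
    (hι : psSubst ![PowerSeries.X, ι] F = 0)
    (q : MvPowerSeries (Fin 2) R)
    (hq : formalDiff F ι = ((X 0 : MvPowerSeries (Fin 2) R) - X 1) * q)
    (L : PowerSeries R)
    -- `L(x) ≡ x mod x²`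
    (hL1 : (PowerSeries.X : PowerSeries R) ^ 2 ∣ L - PowerSeries.X)
    -- `L(F(x,y)) = L(x) + L(y)`
    (hL2 : psSubst (fun _ : Unit => F) L =
        psSubst (fun _ : Unit => (X 0 : MvPowerSeries (Fin 2) R)) L +
        psSubst (fun _ : Unit => (X 1 : MvPowerSeries (Fin 2) R)) L) :
    -- `q(x,x) = L′(x)`
    psSubst ![(PowerSeries.X : PowerSeries R), PowerSeries.X] q =
      PowerSeries.derivativeFun L := by
  obtain ⟨-, hF1, -, -⟩ := hF
  -- constant term of F
  have hF0 : constantCoeff F = 0 := by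
    rw [psSubst_eq_subst _ (by intro i; fin_cases i <;> simp)] at hF1
    have hs : HasSubst ![(X 0 : MvPowerSeries (Fin 2) R), 0] := HasSubst.X_zero
    have h0 := congrArg (subst (R := R) (fun _ : Fin 2 => (0 : MvPowerSeries (Fin 2) R))) hF1
    rw [subst_comp_subst_apply hs HasSubst.zero, subst_X HasSubst.zero] at h0
    have : (fun s => subst (fun _ : Fin 2 => (0 : MvPowerSeries (Fin 2) R))
        (![(X 0 : MvPowerSeries (Fin 2) R), 0] s)) = fun _ => 0 := by
      funext s
      fin_cases s
      · exact subst_X HasSubst.zero 0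
      · change subst _ (0 : MvPowerSeries (Fin 2) R) = 0
        rw [← substAlgHom_apply HasSubst.zero, map_zero]
    rw [this, ← Pi.zero_def, subst_zero_eq_C_constantCoeff] at h0
    simpa using congrArg constantCoeff h0
  have hι0' : MvPowerSeries.constantCoeff (σ := Unit) ι = 0 := hι0
  have hX (s : Fin 2) : constantCoeff (X s : MvPowerSeries (Fin 2) R) = 0 := constantCoeff_X s
  -- L = X * U
  obtain ⟨V, hV⟩ := hL1
  set U : PowerSeries R := 1 + PowerSeries.X * V with hU
  have hLU : L = PowerSeries.X * U := by
    rw [hU]; linear_combination hV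
  have hU0 : MvPowerSeries.constantCoeff (σ := Unit) U = 1 := by
    change PowerSeries.constantCoeff U = 1
    simp [hU]
  have hL0 : MvPowerSeries.constantCoeff (σ := Unit) L = 0 := by
    change PowerSeries.constantCoeff L = 0
    simp [hLU]
  -- substitutions
  set a0 : Unit → MvPowerSeries (Fin 2) R := fun _ => X 0 with ha0
  set a1 : Unit → MvPowerSeries (Fin 2) R := fun _ => X 1 with ha1
  have ca0 : ∀ i, constantCoeff (a0 i) = 0 := fun _ => hX 0
  have ca1 : ∀ i, constantCoeff (a1 i) = 0 := fun _ => hX 1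
  have sa0 : HasSubst a0 := hasSubst_of_constantCoeff_zero ca0
  have sa1 : HasSubst a1 := hasSubst_of_constantCoeff_zero ca1
  have hL2' := hL2
  rw [psSubst_eq_subst (fun _ : Unit => F) (fun _ => hF0), psSubst_eq_subst a0 ca0,
    psSubst_eq_subst a1 ca1] at hL2'
  have sF : HasSubst (fun _ : Unit => F) := hasSubst_of_constantCoeff_zero fun _ => hF0
  -- general: L(F(u,v)) = L(u) + L(v)
  have gen : ∀ {τ : Type} (u v : MvPowerSeries τ R), constantCoeff u = 0 → constantCoeff v = 0 →
      subst (fun _ : Unit => subst ![u, v] F) L =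
        subst (fun _ : Unit => u) L + subst (fun _ : Unit => v) L := by
    intro τ u v hu hv
    have huv : HasSubst ![u, v] := hasSubst_of_constantCoeff_zero (by
      intro i; fin_cases i
      · exact hu
      · exact hv)
    have := congrArg (subst (R := R) ![u, v]) hL2'
    rw [subst_add huv, subst_comp_subst_apply sF huv, subst_comp_subst_apply sa0 huv,
      subst_comp_subst_apply sa1 huv] at this
    simpa only [ha0, ha1, subst_X huv, Matrix.cons_val_zero, Matrix.cons_val_one] using this
  -- L(ι) = -L
  have cι : ∀ i, constantCoeff (![(PowerSeries.X : PowerSeries R), ι] i) = 0 := by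
    intro i; fin_cases i
    · exact PowerSeries.constantCoeff_X
    · exact hι0
  rw [psSubst_eq_subst _ cι] at hι
  have hLι : (0 : MvPowerSeries Unit R) = L + subst (fun _ : Unit => (ι : MvPowerSeries Unit R)) L := by
    have := gen (PowerSeries.X : PowerSeries R) ι PowerSeries.constantCoeff_X hι0
    rw [hι, ← Pi.zero_def, subst_zero_of_constantCoeff_zero hL0] at this
    rw [this]
    congr 1
    have h := congrFun (subst_self (σ := Unit) (R := R)) L
    exact h
  have sι : HasSubst (fun _ : Unit => (ι : MvPowerSeries Unit R)) :=
    hasSubst_of_constantCoeff_zero fun _ => hι0'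
  have hLι1 : subst (fun _ : Unit => subst a1 ι) L = - subst a1 L := by
    have := congrArg (subst (R := R) a1) hLι
    rw [subst_add sa1, subst_comp_subst_apply sι sa1, ← substAlgHom_apply sa1, map_zero] at this
    linear_combination -this
  -- formal difference
  set G : MvPowerSeries (Fin 2) R := (X 0 - X 1) * q with hG
  have hG0 : constantCoeff G = 0 := by simp [hG]
  have sG : HasSubst (fun _ : Unit => G) := hasSubst_of_constantCoeff_zero fun _ => hG0
  have cι1 : constantCoeff (subst a1 ι) = 0 := constantCoeff_subst_eq_zero sa1 ca1 hι0'
  unfold formalDiff at hq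
  rw [psSubst_eq_subst (fun _ : Unit => (X 1 : MvPowerSeries (Fin 2) R)) ca1,
    psSubst_eq_subst _ (by
      intro i; fin_cases i
      · exact hX 0
      · exact cι1)] at hq
  have hLG : subst (fun _ : Unit => G) L = subst a0 L - subst a1 L := by
    have := gen (X 0 : MvPowerSeries (Fin 2) R) (subst a1 ι) (hX 0) cι1
    rw [hq, hLι1] at this
    rw [this, sub_eq_add_neg]
  have hLG2 : subst (fun _ : Unit => G) L = G * subst (fun _ : Unit => G) U := by
    rw [hLU]
    have h := subst_mul sG (PowerSeries.X : PowerSeries R) U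
    have h2 := subst_X (R := R) sG ()
    exact h.trans (congrArg (· * _) h2)
  have hP := coeff_quot L (q * subst (fun _ : Unit => G) U) (by
    rw [psSubst_eq_subst a0 ca0, psSubst_eq_subst a1 ca1, ← hLG, hLG2, hG, mul_assoc])
  rw [← diag_quot L _ (fun i j => hP j i)]
  have cd : ∀ i, constantCoeff (![(PowerSeries.X : PowerSeries R), PowerSeries.X] i) = 0 := by
    intro i; fin_cases i <;> exact PowerSeries.constantCoeff_X
  have sd := hasSubst_of_constantCoeff_zero cd
  rw [psSubst_eq_subst _ cd, psSubst_eq_subst _ cd, subst_mul sd, subst_comp_subst_apply sG sd]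
  have hGd : subst ![(PowerSeries.X : PowerSeries R), PowerSeries.X] G = 0 := by
    rw [hG, subst_mul sd, subst_sub sd, subst_X sd, subst_X sd]
    simp
  rw [hGd, ← Pi.zero_def, subst_zero_eq_C_constantCoeff, hU0, map_one, map_one, mul_one]
end
end

section
/- Assume the commutative ring R is torsion-free as a ℤ-module, and let F be a formal group law over R with associated power series q(x,y). Then the following are equivalent: (i) q(x,y) = q(y,x) (q is symmetric); (ii) the one-variable power series q(x,x) is even, i.e., only even powers of x occur; (iii) every power series L ∈ (ℚ ⊗_ℤ R)⟦x⟧ with L(x) ≡ x mod x² and L(F(x,y)) = L(x) + L(y) (the logarithm of F over ℚ ⊗_ℤ R) is an odd power series, i.e., L(−x) = −L(x). -/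
noncomputable section
open MvPowerSeries

variable {k : Type*} [CommRing k]

section helpers

theorem hs_of {σ τ : Type*} [Finite σ] {a : σ → MvPowerSeries τ k}
    (ha : ∀ i, constantCoeff (a i) = 0) : HasSubst a :=
  hasSubst_of_constantCoeff_zero ha

theorem psSubst_eq {σ τ : Type*} [Fintype σ] [DecidableEq σ]
    {a : σ → MvPowerSeries τ k} (ha : ∀ i, constantCoeff (a i) = 0) (f : MvPowerSeries σ k) :
    psSubst a f = subst a f := by
  ext e
  rw [coeff_subst (hs_of ha)]
  rw [finsum_eq_sum_of_support_subset (s := Finset.Iic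
    (Finsupp.equivFunOnFinite.symm fun _ : σ => e.sum fun _ m => m))]
  · change (∑ d ∈ _, _) = _
    refine Finset.sum_congr rfl fun d _ => ?_
    rw [smul_eq_mul, Finsupp.prod_fintype _ _ (by simp)]
  · intro d hd
    by_contra hcon
    apply hd
    simp only [Finset.coe_Iic, Set.mem_Iic] at hcon
    obtain ⟨i, hi⟩ : ∃ i, e.degree < d i := by
      by_contra! h
      exact hcon fun i => h i
    simp only [smul_eq_mul]
    rw [Finsupp.prod_fintype _ _ (by simp), ← Finset.mul_prod_erase _ _ (Finset.mem_univ i)]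
    rw [coeff_of_lt_order (f := a i ^ d i * _), mul_zero]
    refine lt_of_lt_of_le ?_ le_order_mul
    refine lt_of_lt_of_le ?_ (le_add_of_nonneg_right zero_le)
    refine lt_of_lt_of_le ?_ (le_order_pow_of_constantCoeff_eq_zero _ (ha i))
    exact_mod_cast hi

theorem cc2 {τ : Type*} {a b : MvPowerSeries τ k} (ha : constantCoeff a = 0)
    (hb : constantCoeff b = 0) : ∀ i, constantCoeff (![a, b] i) = 0 := by
  intro i; fin_cases i <;> simp [ha, hb]

theorem comp_subst1 {σ τ υ : Type*} [Finite σ] [Finite τ] {a : σ → MvPowerSeries τ k}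
    {c : τ → MvPowerSeries υ k} (ha : ∀ i, constantCoeff (a i) = 0)
    (hc : ∀ i, constantCoeff (c i) = 0) (f : MvPowerSeries σ k) :
    subst c (subst a f) = subst (fun s => subst c (a s)) f :=
  subst_comp_subst_apply (hs_of ha) (hs_of hc) f

theorem comp_subst2 {τ υ : Type*} [Finite τ] {a b : MvPowerSeries τ k}
    {c : τ → MvPowerSeries υ k} (ha : constantCoeff a = 0) (hb : constantCoeff b = 0)
    (hc : ∀ i, constantCoeff (c i) = 0) (f : MvPowerSeries (Fin 2) k) :
    subst c (subst ![a, b] f) = subst ![subst c a, subst c b] f := by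
  rw [comp_subst1 (cc2 ha hb) hc]
  congr 1
  funext i; fin_cases i <;> rfl

theorem cc_subst {σ τ : Type*} [Finite σ] {a : σ → MvPowerSeries τ k}
    (ha : ∀ i, constantCoeff (a i) = 0) {f : MvPowerSeries σ k} (hf : constantCoeff f = 0) :
    constantCoeff (subst a f) = 0 :=
  constantCoeff_subst_eq_zero (hs_of ha) ha hf

theorem subst_z {σ τ : Type*} [Finite σ] {a : σ → MvPowerSeries τ k}
    (ha : ∀ i, constantCoeff (a i) = 0) : subst a (0 : MvPowerSeries σ k) = 0 := by
  rw [← coe_substAlgHom (hs_of ha), map_zero]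

theorem subst_n {σ τ : Type*} [Finite σ] {a : σ → MvPowerSeries τ k}
    (ha : ∀ i, constantCoeff (a i) = 0) (f : MvPowerSeries σ k) : 
    subst a (-f) = - subst a f := by
  rw [← coe_substAlgHom (hs_of ha), map_neg]

theorem subst_o {σ τ : Type*} [Finite σ] {a : σ → MvPowerSeries τ k}
    (ha : ∀ i, constantCoeff (a i) = 0) : subst a (1 : MvPowerSeries σ k) = 1 := by
  rw [← coe_substAlgHom (hs_of ha), map_one]

theorem ccX {σ : Type*} (i : σ) : constantCoeff (X i : MvPowerSeries σ k) = 0 := by simp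

theorem swapPS_eq (f : MvPowerSeries (Fin 2) k) : swapPS f = subst ![X 1, X 0] f := by
  ext e
  rw [coeff_subst (hs_of (cc2 (ccX _) (ccX _))),
    finsum_eq_single _ (Finsupp.equivMapDomain (Equiv.swap 0 1) e)]
  · rw [Finsupp.prod_fintype _ _ (by simp)]
    have : ∏ i : Fin 2, (![X 1, X 0] : Fin 2 → MvPowerSeries (Fin 2) k) i ^
        (Finsupp.equivMapDomain (Equiv.swap 0 1) e) i = monomial e 1 := by
      rw [monomial_one_eq, Finsupp.prod_fintype _ _ (by simp)]
      simp [Fin.prod_univ_two, mul_comm]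
    rw [this]
    simp
    rfl
  · intro d hd
    rw [Finsupp.prod_fintype _ _ (by simp)]
    have : ∏ i : Fin 2, (![X 1, X 0] : Fin 2 → MvPowerSeries (Fin 2) k) i ^ d i
        = monomial (Finsupp.equivMapDomain (Equiv.swap 0 1) d) 1 := by
      rw [monomial_one_eq, Finsupp.prod_fintype _ _ (by simp)]
      simp [Fin.prod_univ_two, mul_comm]
    rw [this, coeff_monomial_ne, smul_zero]
    rintro rfl
    apply hd
    ext i
    simp

open scoped WithPiTopology in
theorem continuous_pd {υ : Type*} [TopologicalSpace k] [IsTopologicalRing k] (u : υ) :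
    Continuous (pderiv k u : MvPowerSeries υ k → MvPowerSeries υ k) := by
  refine continuous_pi fun e => ?_
  change Continuous fun f : MvPowerSeries υ k => coeff e (pderiv k u f)
  simp_rw [coeff_pderiv]
  exact (WithPiTopology.continuous_coeff k _).mul_const _

open scoped WithPiTopology in
theorem chain_rule {σ τ : Type*} [Fintype σ] [DecidableEq σ] {a : σ → MvPowerSeries τ k}
    (ha : ∀ i, constantCoeff (a i) = 0) (t : τ) (f : MvPowerSeries σ k) :
    pderiv k t (subst a f) = ∑ s, subst a (pderiv k s f) * pderiv k t (a s) := by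
  let _ : UniformSpace k := ⊥
  have _ : DiscreteUniformity k := ⟨rfl⟩
  have hs := continuous_subst (R := k) (hs_of ha)
  have key := DenseRange.equalizer (WithPiTopology.denseRange_toMvPowerSeries (σ := σ) (R := k))
    (g := fun f => pderiv k t (subst a f))
    (h := fun f => ∑ s, subst a (pderiv k s f) * pderiv k t (a s))
    ((continuous_pd t).comp hs)
    (continuous_finsetSum _ fun s _ => (hs.comp (continuous_pd s)).mul_const _)
  refine congrFun (key ?_) f
  funext p
  simp only [Function.comp]
  have h := hs_of ha
  induction p using MvPolynomial.induction_on with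
  | C r =>
    rw [MvPolynomial.coe_C, subst_C]
    simp [subst_z ha]
  | add p q hp hq =>
    simp only [MvPolynomial.coe_add, subst_add h, map_add, hp, hq, add_mul,
      Finset.sum_add_distrib]
  | mul_X p i hp =>
    simp only [MvPolynomial.coe_mul, MvPolynomial.coe_X, subst_mul h, subst_X h,
      Derivation.leibniz, smul_eq_mul, hp, pderiv_X, subst_add h, add_mul,
      Finset.sum_add_distrib]
    congr 1
    · rw [Finset.sum_eq_single i]
      · simp [subst_o ha]
      · intro b _ hb
        simp [hb.symm, subst_z ha]
      · simp
    · rw [Finset.mul_sum]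
      exact Finset.sum_congr rfl fun _ _ => by ring

theorem reg01 {g : MvPowerSeries (Fin 2) k} 
    (h : ((X 0 : MvPowerSeries (Fin 2) k) - X 1) * g = 0) : g = 0 := by
  have hx : (X 0 : MvPowerSeries (Fin 2) k) * g = X 1 * g := by
    rwa [sub_mul, sub_eq_zero] at h
  have key : ∀ b a : ℕ, coeff (Finsupp.single 0 a + Finsupp.single 1 b) g = 0 := by
    intro b
    induction b with
    | zero =>
      intro a
      have := congrArg (coeff (Finsupp.single 0 1 + Finsupp.single 0 a)) hx
      rw [X, coeff_add_monomial_mul, one_mul, X, coeff_monomial_mul, if_neg] at this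
      · simpa using this
      · intro h
        have := h 1
        simp at this
    | succ b ih =>
      intro a
      have := congrArg (coeff (Finsupp.single 0 1 + 
        (Finsupp.single 0 a + Finsupp.single 1 (b+1)))) hx
      rw [X, coeff_add_monomial_mul, one_mul] at this
      rw [this, show (Finsupp.single 0 1 + (Finsupp.single 0 a + Finsupp.single 1 (b+1)) 
        : Fin 2 →₀ ℕ) = Finsupp.single 1 1 + (Finsupp.single 0 (a+1) + Finsupp.single 1 b) by
          simp only [Finsupp.single_add]; abel, X, coeff_add_monomial_mul, one_mul, ih]
  ext e
  have := key (e 1) (e 0)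
  rwa [show Finsupp.single 0 (e 0) + Finsupp.single 1 (e 1) = e by
    ext i; fin_cases i <;> simp] at this

structure FG (F : MvPowerSeries (Fin 2) k) : Prop where
  c0 : constantCoeff F = 0
  comm : subst ![X 1, X 0] F = F
  unit : subst ![X 0, 0] F = (X 0 : MvPowerSeries (Fin 2) k)
  assoc : subst ![subst ![(X 0 : MvPowerSeries (Fin 3) k), X 1] F, X 2] F =
    subst ![(X 0 : MvPowerSeries (Fin 3) k), subst ![(X 1 : MvPowerSeries (Fin 3) k), X 2] F] F

theorem cc_subst_eq {σ τ : Type*} [Finite σ] {a : σ → MvPowerSeries τ k}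
    (ha : ∀ i, constantCoeff (a i) = 0) (f : MvPowerSeries σ k) :
    constantCoeff (subst a f) = constantCoeff f := by
  have h := cc_subst ha (f := f - C (constantCoeff f)) (by simp)
  rw [subst_sub (hs_of ha), subst_C] at h
  simpa [sub_eq_zero] using h

theorem cc0 {σ : Type*} : constantCoeff (0 : MvPowerSeries σ k) = 0 := map_zero _

theorem FG.of {F : MvPowerSeries (Fin 2) k} (hF : IsFormalGroupLaw F) : FG F := by
  obtain ⟨h1, h2, -, h4⟩ := hF
  rw [psSubst_eq (cc2 (ccX _) cc0)] at h2
  have c0 : constantCoeff F = 0 := by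
    have := congrArg constantCoeff h2
    rwa [cc_subst_eq (cc2 (ccX _) cc0), ccX] at this
  refine ⟨c0, by rw [← swapPS_eq, h1], h2, ?_⟩
  rw [psSubst_eq (cc2 (ccX 0) (ccX 1)), psSubst_eq (cc2 (ccX 1) (ccX 2)),
    psSubst_eq (cc2 (cc_subst (cc2 (ccX 0) (ccX 1)) c0) (ccX 2)),
    psSubst_eq (cc2 (ccX _) (cc_subst (cc2 (ccX _) (ccX _)) c0))] at h4
  exact h4

theorem map_subst2 {S : Type*} [CommRing S] (φ : k →+* S) {τ : Type*} {a b : MvPowerSeries τ k}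
    (ha : constantCoeff a = 0) (hb : constantCoeff b = 0) (f : MvPowerSeries (Fin 2) k) :
    map φ (subst ![a, b] f) = subst ![map φ a, map φ b] (map φ f) := by
  rw [map_subst (hs_of (cc2 ha hb))]
  congr 1
  funext i; fin_cases i <;> rfl

theorem FG.map {S : Type*} [CommRing S] (φ : k →+* S) {F : MvPowerSeries (Fin 2) k}
    (hF : FG F) : FG (MvPowerSeries.map φ F) where
  c0 := by simp [hF.c0]
  comm := by
    have := congrArg (MvPowerSeries.map φ) hF.comm
    rwa [map_subst2 φ (ccX _) (ccX _), map_X, map_X] at this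
  unit := by
    have := congrArg (MvPowerSeries.map φ) hF.unit
    rwa [map_subst2 φ (ccX _) cc0, map_X, map_zero] at this
  assoc := by
    have := congrArg (MvPowerSeries.map φ) hF.assoc
    rwa [map_subst2 φ (cc_subst (cc2 (ccX _) (ccX _)) hF.c0) (ccX _),
      map_subst2 φ (ccX _) (cc_subst (cc2 (ccX _) (ccX _)) hF.c0),
      map_subst2 φ (ccX _) (ccX _), map_subst2 φ (ccX _) (ccX _), map_X, map_X, map_X] at this

namespace FG
variable {F : MvPowerSeries (Fin 2) k} {τ : Type*} {a b c : MvPowerSeries τ k}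

theorem sX {σ τ : Type*} [Finite σ] {a : σ → MvPowerSeries τ k}
    (ha : ∀ i, constantCoeff (a i) = 0) (i : σ) : 
    subst a (X i : MvPowerSeries σ k) = a i := subst_X (hs_of ha) i

theorem cc (hF : FG F) (ha : constantCoeff a = 0) (hb : constantCoeff b = 0) : 
    constantCoeff (subst ![a, b] F) = 0 := cc_subst (cc2 ha hb) hF.c0

theorem comm' (hF : FG F) (ha : constantCoeff a = 0) (hb : constantCoeff b = 0) :
    subst ![b, a] F = subst ![a, b] F := by
  have := congrArg (subst ![a, b]) hF.comm
  rw [comp_subst2 (ccX _) (ccX _) (cc2 ha hb), sX (cc2 ha hb), sX (cc2 ha hb)] at this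
  exact this

theorem unit' (hF : FG F) (ha : constantCoeff a = 0) :
    subst ![a, 0] F = a := by
  have := congrArg (subst ![a, 0]) hF.unit
  rw [comp_subst2 (ccX _) cc0 (cc2 ha cc0), sX (cc2 ha cc0), subst_z (cc2 ha cc0)] at this
  exact this

theorem unitl (hF : FG F) (ha : constantCoeff a = 0) :
    subst ![0, a] F = a := by
  rw [hF.comm' ha cc0, hF.unit' ha]

theorem cc3 (ha : constantCoeff a = 0) (hb : constantCoeff b = 0) (hc : constantCoeff c = 0) :
    ∀ i, constantCoeff (![a, b, c] i) = 0 := by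
  intro i; fin_cases i <;> simp [ha, hb, hc]

theorem assoc' (hF : FG F) (ha : constantCoeff a = 0) (hb : constantCoeff b = 0)
    (hc : constantCoeff c = 0) :
    subst ![subst ![a, b] F, c] F = subst ![a, subst ![b, c] F] F := by
  have h3 := cc3 ha hb hc
  have := congrArg (subst ![a, b, c]) hF.assoc
  rw [comp_subst2 (hF.cc (ccX _) (ccX _)) (ccX _) h3, 
    comp_subst2 (ccX _) (hF.cc (ccX _) (ccX _)) h3, comp_subst2 (ccX _) (ccX _) h3,
    comp_subst2 (ccX _) (ccX _) h3, sX h3, sX h3, sX h3] at this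
  exact this

theorem cancel (hF : FG F) (ha : constantCoeff a = 0) (hb : constantCoeff b = 0)
    (hc : constantCoeff c = 0) (h1 : subst ![a, b] F = 0) (h2 : subst ![a, c] F = 0) : b = c := by
  have := hF.assoc' hb ha hc
  rw [h2, hF.comm' ha hb, h1, hF.unitl hc, hF.unit' hb] at this
  exact this.symm

/-- symmetric iff iota is -X -/
theorem symm_iff (hF : FG F) {ι : PowerSeries k} (hι0 : constantCoeff ι = 0)
    (hι : subst ![X (), ι] F = 0) {q : MvPowerSeries (Fin 2) k}
    (hq : subst ![X 0, subst (fun _ : Unit => (X 1 : MvPowerSeries (Fin 2) k)) ι] F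
      = ((X 0 : MvPowerSeries (Fin 2) k) - X 1) * q) :
    subst ![X 1, X 0] q = q ↔ ι = - X () := by
  have c1 : constantCoeff (subst (fun _ : Unit => (X 1 : MvPowerSeries (Fin 2) k)) ι) = 0 :=
    cc_subst (fun _ => ccX _) hι0
  have cw : ∀ i, constantCoeff ((![X 1, X 0] : Fin 2 → MvPowerSeries (Fin 2) k) i) = 0 :=
    cc2 (ccX _) (ccX _)
  have hq' := congrArg (subst (![X 1, X 0] : Fin 2 → MvPowerSeries (Fin 2) k)) hq
  rw [comp_subst2 (ccX _) c1 cw, subst_mul (hs_of cw), subst_sub (hs_of cw), sX cw, sX cw,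
    comp_subst1 (fun _ => ccX _) cw] at hq'
  simp only [sX cw, Matrix.cons_val_zero, Matrix.cons_val_one] at hq'
  constructor
  · intro h
    rw [h] at hq'
    have e : subst ![X 1, subst (fun _ : Unit => (X 0 : MvPowerSeries (Fin 2) k)) ι] F
      = - subst ![X 0, subst (fun _ : Unit => (X 1 : MvPowerSeries (Fin 2) k)) ι] F := by
      rw [hq, hq']; ring
    have cv : ∀ i, constantCoeff ((![0, X ()] : Fin 2 → MvPowerSeries Unit k) i) = 0 :=
      cc2 cc0 (ccX _)
    have e' := congrArg (subst (![0, X ()] : Fin 2 → MvPowerSeries Unit k)) e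
    rw [subst_n cv, comp_subst2 (ccX _) (cc_subst (fun _ => ccX _) hι0) cv,
      comp_subst2 (ccX _) (cc_subst (fun _ => ccX _) hι0) cv,
      comp_subst1 (fun _ => ccX _) cv, comp_subst1 (fun _ => ccX _) cv] at e'
    simp only [sX cv, Matrix.cons_val_zero, Matrix.cons_val_one] at e'
    have e1 : subst (fun _ : Unit => (X () : MvPowerSeries Unit k)) ι = ι := 
      congrFun (subst_self (σ := Unit) (R := k)) ι
    have e2 : subst (fun _ : Unit => (0 : MvPowerSeries Unit k)) ι = 0 := 
      subst_zero_of_constantCoeff_zero hι0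
    rw [e1, e2, hF.unit' (ccX _), hF.unitl hι0] at e'
    rw [e', neg_neg]
  · rintro rfl
    have hn : ∀ {τ : Type} {a : MvPowerSeries τ k}, constantCoeff a = 0 → 
        subst ![a, -a] F = 0 := by
      intro τ a ha
      have := congrArg (subst (fun _ : Unit => a)) hι
      rw [comp_subst2 (ccX _) hι0 (fun _ => ha), subst_n (fun _ => ha), sX (fun _ => ha),
        subst_z (fun _ => ha)] at this
      exact this
    simp only [subst_n (fun _ => ccX _), sX (fun (_ : Unit) => ccX (k := k) (_ : Fin 2))] at hq hq'
    have n0 : constantCoeff (-X 0 : MvPowerSeries (Fin 2) k) = 0 := by simp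
    have n1 : constantCoeff (-X 1 : MvPowerSeries (Fin 2) k) = 0 := by simp
    have cD := hF.cc (ccX 0) n1
    have cD' := hF.cc (ccX 1) n0
    have key : subst ![subst ![(X 0 : MvPowerSeries (Fin 2) k), -X 1] F,
        subst ![(X 1 : MvPowerSeries (Fin 2) k), -X 0] F] F = 0 := by
      rw [hF.assoc' (ccX 0) n1 cD', ← hF.assoc' n1 (ccX 1) n0, hF.comm' (ccX 1) n1, hn (ccX 1),
        hF.unitl n0, hn (ccX 0)]
    have := hF.cancel cD cD' (by simp [cD]) key (hn cD)
    rw [hq, hq'] at this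
    rw [← sub_eq_zero]
    apply reg01
    linear_combination -this

end FG

namespace FG
variable {K : Type*} [CommRing K] [Algebra ℚ K]

theorem exists_antideriv (g : PowerSeries K) : ∃ L : PowerSeries K,
    constantCoeff L = 0 ∧ pderiv K () L = g := by
  refine ⟨PowerSeries.mk fun n => (n : ℚ)⁻¹ • PowerSeries.coeff (n - 1) g, ?_, ?_⟩
  · change PowerSeries.constantCoeff _ = 0
    simp
  · change PowerSeries.derivative K _ = g
    ext n
    rw [PowerSeries.coeff_derivative, PowerSeries.coeff_mk]
    have : ((n : K) + 1) = ((n + 1 : ℕ) : ℚ) • (1 : K) := by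
      rw [← Algebra.algebraMap_eq_smul_one]; simp
    rw [this, smul_mul_smul_comm, inv_mul_cancel₀ (by positivity)]
    simp

theorem pd_one {k : Type*} [CommRing k] {F : MvPowerSeries (Fin 2) k} (hF : FG F) :
    constantCoeff (pderiv k 1 F) = 1 := by
  have cv : ∀ i, constantCoeff ((![0, X ()] : Fin 2 → MvPowerSeries Unit k) i) = 0 :=
    cc2 cc0 (ccX _)
  have h := congrArg (pderiv k ()) (hF.unitl (ccX (k := k) ()))
  rw [chain_rule cv] at h
  have h' := congrArg constantCoeff h
  simpa [Fin.sum_univ_two, cc_subst_eq cv] using h'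

theorem pd_key {k : Type*} [CommRing k] {F : MvPowerSeries (Fin 2) k} (hF : FG F) :
    pderiv k 1 F * subst ![(X 1 : MvPowerSeries (Fin 2) k), 0] (pderiv k 1 F)
      = subst ![F, 0] (pderiv k 1 F) := by
  have h := congrArg (pderiv k 2) hF.assoc
  have cxy := hF.cc (ccX (k := k) (0 : Fin 3)) (ccX 1)
  have cyz := hF.cc (ccX (k := k) (1 : Fin 3)) (ccX 2)
  rw [chain_rule (cc2 cxy (ccX _)), chain_rule (cc2 (ccX _) cyz)] at h
  simp only [Fin.sum_univ_two, Matrix.cons_val_zero, Matrix.cons_val_one, pderiv_X_self] at h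
  rw [chain_rule (cc2 (ccX _) (ccX _)), chain_rule (cc2 (ccX _) (ccX _))] at h
  simp only [Fin.sum_univ_two, Matrix.cons_val_zero, Matrix.cons_val_one, pderiv_X_self,
    pderiv_X_of_ne (R := k) (show (0 : Fin 3) ≠ 2 by decide),
    pderiv_X_of_ne (R := k) (show (1 : Fin 3) ≠ 2 by decide), mul_zero, zero_add, mul_one] at h
  have h3 := cc3 (ccX (k := k) (0 : Fin 2)) (ccX 1) cc0
  have h' := congrArg (subst (![X 0, X 1, 0] : Fin 3 → MvPowerSeries (Fin 2) k)) h
  have id2 : ∀ f : MvPowerSeries (Fin 2) k, subst ![(X 0 : MvPowerSeries (Fin 2) k), X 1] f = f := by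
    intro f
    have := congrFun (subst_self (σ := Fin 2) (R := k)) f
    refine Eq.trans ?_ this
    congr 1
    funext i; fin_cases i <;> rfl
  rw [subst_mul (hs_of h3), comp_subst2 cxy (ccX _) h3, comp_subst2 (ccX _) cyz h3,
    comp_subst2 (ccX _) (ccX _) h3, comp_subst2 (ccX _) (ccX _) h3, 
    comp_subst2 (ccX _) (ccX _) h3, sX h3, sX h3, sX h3] at h'
  have e0 : (![X 0, X 1, 0] : Fin 3 → MvPowerSeries (Fin 2) k) 0 = X 0 := rfl
  have e1 : (![X 0, X 1, 0] : Fin 3 → MvPowerSeries (Fin 2) k) 1 = X 1 := rfl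
  have e2 : (![X 0, X 1, 0] : Fin 3 → MvPowerSeries (Fin 2) k) 2 = 0 := rfl
  rw [e0, e1, e2, hF.unit' (ccX _), id2, id2] at h'
  exact h'.symm

theorem chain1 {k τ : Type*} [CommRing k] {g : MvPowerSeries τ k} (hg : constantCoeff g = 0)
    (t : τ) (f : MvPowerSeries Unit k) : pderiv k t (subst (fun _ : Unit => g) f)
      = subst (fun _ : Unit => g) (pderiv k () f) * pderiv k t g := by
  rw [chain_rule (fun _ => hg)]
  simp

theorem exists_log {F : MvPowerSeries (Fin 2) K} (hF : FG F) :
    ∃ L : PowerSeries K, constantCoeff L = 0 ∧ constantCoeff (pderiv K () L) = 1 ∧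
      subst (fun _ : Unit => F) L = subst (fun _ : Unit => (X 0 : MvPowerSeries (Fin 2) K)) L
        + subst (fun _ : Unit => (X 1 : MvPowerSeries (Fin 2) K)) L := by
  have _ : IsAddTorsionFree K := IsAddTorsionFree.of_module_rat K
  have cp := cc2 (ccX (k := K) ()) cc0
  have hp1 : constantCoeff (subst ![(X () : MvPowerSeries Unit K), 0] (pderiv K 1 F)) = 1 := by
    rw [cc_subst_eq cp, hF.pd_one]
  set p := subst ![(X () : MvPowerSeries Unit K), 0] (pderiv K 1 F) with hp
  obtain ⟨r, hr⟩ : ∃ r, p * r = 1 := by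
    have : IsUnit p := by
      rw [MvPowerSeries.isUnit_iff_constantCoeff, hp1]; exact isUnit_one
    exact this.exists_right_inv
  obtain ⟨L, hL0, hL⟩ := exists_antideriv r
  refine ⟨L, hL0, ?_, ?_⟩
  · have := congrArg constantCoeff hr
    rw [map_mul, hp1, one_mul, map_one] at this
    rw [hL, this]
  have pg : ∀ {g : MvPowerSeries (Fin 2) K}, constantCoeff g = 0 → 
      subst (fun _ : Unit => g) p = subst ![g, 0] (pderiv K 1 F) := by
    intro g hg
    rw [hp, comp_subst2 (ccX _) cc0 (fun _ => hg), sX (fun _ => hg), subst_z (fun _ => hg)]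
  have rg : ∀ {g : MvPowerSeries (Fin 2) K}, constantCoeff g = 0 → 
      subst (fun _ : Unit => g) p * subst (fun _ : Unit => g) r = 1 := by
    intro g hg
    rw [← subst_mul (hs_of fun _ => hg), hr, subst_o fun _ => hg]
  have key := hF.pd_key
  rw [← pg hF.c0, ← pg (ccX 1)] at key
  set G := subst (fun _ : Unit => F) L - (subst (fun _ : Unit => (X 0 : MvPowerSeries (Fin 2) K)) L
        + subst (fun _ : Unit => (X 1 : MvPowerSeries (Fin 2) K)) L) with hG
  have d1 : pderiv K 1 G = 0 := by
    rw [hG, map_sub, map_add, chain1 hF.c0, chain1 (ccX _), chain1 (ccX _), hL]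
    simp only [pderiv_X_self,
      pderiv_X_of_ne (R := K) (show (0 : Fin 2) ≠ 1 by decide)]
    have a1 := rg hF.c0
    have a2 := rg (ccX (k := K) (1 : Fin 2))
    linear_combination (subst (fun _ : Unit => F) r * subst (fun _ : Unit => X 1) r) * key
      + subst (fun _ : Unit => X 1) r * a1 - subst (fun _ : Unit => F) r * pderiv K 1 F * a2
  have cw := cc2 (ccX (k := K) (1 : Fin 2)) (ccX 0)
  have sG : subst ![X 1, X 0] G = G := by
    rw [hG, subst_sub (hs_of cw), subst_add (hs_of cw), comp_subst1 (fun _ => hF.c0) cw,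
      comp_subst1 (fun _ => ccX _) cw, comp_subst1 (fun _ => ccX _) cw]
    simp only [hF.comm, sX cw, Matrix.cons_val_zero, Matrix.cons_val_one]
    ring
  have d0 : pderiv K 0 G = 0 := by
    conv_lhs => rw [← sG]
    rw [chain_rule cw]
    simp [Fin.sum_univ_two, d1, subst_z cw]
  have : G = 0 := by
    apply pderiv.ext
    · intro i; fin_cases i
      · simpa using d0
      · simpa using d1
    · rw [hG]
      simp [cc_subst_eq (fun (_ : Unit) => hF.c0), cc_subst_eq (fun (_ : Unit) => ccX (k := K) (_ : Fin 2)), hL0]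
  rwa [hG, sub_eq_zero] at this

end FG

namespace FG
variable {K : Type*} [CommRing K]

theorem log_sub {F : MvPowerSeries (Fin 2) K} (hF : FG F) {L : PowerSeries K} 
    (hL : subst (fun _ : Unit => F) L = subst (fun _ : Unit => (X 0 : MvPowerSeries (Fin 2) K)) L
        + subst (fun _ : Unit => (X 1 : MvPowerSeries (Fin 2) K)) L)
    {τ : Type*} {a b : MvPowerSeries τ K}
    (ha : constantCoeff a = 0) (hb : constantCoeff b = 0) :
    subst (fun _ : Unit => subst ![a, b] F) L 
      = subst (fun _ : Unit => a) L + subst (fun _ : Unit => b) L := by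
  have cw := cc2 ha hb
  have := congrArg (subst ![a, b]) hL
  rw [subst_add (hs_of cw), comp_subst1 (fun _ => hF.c0) cw, comp_subst1 (fun _ => ccX _) cw,
    comp_subst1 (fun _ => ccX _) cw] at this
  simpa only [sX cw, Matrix.cons_val_zero, Matrix.cons_val_one] using this

theorem log_zero {L : PowerSeries K} (hX : (X () : MvPowerSeries Unit K) ^ 2 ∣ L - X ())
    {τ : Type*} {c : MvPowerSeries τ K} (hc : constantCoeff c = 0)
    (h : subst (fun _ : Unit => c) L = 0) : c = 0 := by
  obtain ⟨M, hM⟩ := hX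
  have hs : ∀ _ : Unit, constantCoeff c = 0 := fun _ => hc
  have e := congrArg (subst (fun _ : Unit => c)) hM
  rw [subst_sub (hs_of hs), subst_mul (hs_of hs), subst_pow (hs_of hs), sX hs, h] at e
  have hu : IsUnit (1 + c * subst (fun _ : Unit => c) M) := by
    rw [MvPowerSeries.isUnit_iff_constantCoeff]; simp [hc]
  have : (1 + c * subst (fun _ : Unit => c) M) * c = 0 := by linear_combination -e
  exact (hu.mul_right_eq_zero).1 this

theorem cc_of_dvd {L : PowerSeries K} (hX : (X () : MvPowerSeries Unit K) ^ 2 ∣ L - X ()) :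
    constantCoeff L = 0 := by
  obtain ⟨M, hM⟩ := hX
  rw [sub_eq_iff_eq_add.1 hM]
  simp

theorem odd_iff {F : MvPowerSeries (Fin 2) K} (hF : FG F) {L : PowerSeries K} 
    (hX : (X () : MvPowerSeries Unit K) ^ 2 ∣ L - X ())
    (hL : subst (fun _ : Unit => F) L = subst (fun _ : Unit => (X 0 : MvPowerSeries (Fin 2) K)) L
        + subst (fun _ : Unit => (X 1 : MvPowerSeries (Fin 2) K)) L) :
    subst (fun _ : Unit => -(X () : MvPowerSeries Unit K)) L = -L ↔
      subst ![(X () : MvPowerSeries Unit K), - X ()] F = 0 := by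
  have n : constantCoeff (-X () : MvPowerSeries Unit K) = 0 := by simp
  have h := hF.log_sub hL (ccX ()) n
  have e1 : subst (fun _ : Unit => (X () : MvPowerSeries Unit K)) L = L := 
      congrFun (subst_self (σ := Unit) (R := K)) L
  have e2 : subst (fun _ : Unit => (0 : MvPowerSeries Unit K)) L = 0 := 
      subst_zero_of_constantCoeff_zero (cc_of_dvd hX)
  rw [e1] at h
  constructor
  · intro ho
    rw [ho, add_neg_cancel] at h
    exact log_zero hX (hF.cc (ccX _) n) h
  · intro ho
    rw [ho, e2] at h
    exact eq_neg_of_add_eq_zero_right h.symm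

theorem diag {F : MvPowerSeries (Fin 2) K} (hF : FG F) {L : PowerSeries K} 
    (hL1 : constantCoeff (pderiv K () L) = 1)
    (hL : subst (fun _ : Unit => F) L = subst (fun _ : Unit => (X 0 : MvPowerSeries (Fin 2) K)) L
        + subst (fun _ : Unit => (X 1 : MvPowerSeries (Fin 2) K)) L)
    {ι : PowerSeries K} (hι0 : constantCoeff ι = 0) {q : MvPowerSeries (Fin 2) K}
    (hq : subst ![X 0, subst (fun _ : Unit => (X 1 : MvPowerSeries (Fin 2) K)) ι] F
      = ((X 0 : MvPowerSeries (Fin 2) K) - X 1) * q) :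
    subst ![(X () : MvPowerSeries Unit K), X ()] q = pderiv K () L := by
  have c1 : constantCoeff (subst (fun _ : Unit => (X 1 : MvPowerSeries (Fin 2) K)) ι) = 0 :=
    cc_subst (fun _ => ccX _) hι0
  have h := hF.log_sub hL (ccX 0) c1
  rw [hq] at h
  have cD : constantCoeff (((X 0 : MvPowerSeries (Fin 2) K) - X 1) * q) = 0 := by simp
  have h' := congrArg (pderiv K 0) h
  rw [map_add, chain1 cD, chain1 (ccX _), chain1 c1, chain1 (ccX _)] at h'
  simp only [pderiv_X_self, Derivation.leibniz, map_sub, smul_eq_mul,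
    pderiv_X_of_ne (R := K) (show (1 : Fin 2) ≠ 0 by decide), mul_zero, add_zero, mul_one,
    sub_zero] at h'
  have cv := cc2 (ccX (k := K) ()) (ccX ())
  have h2 := congrArg (subst ![(X () : MvPowerSeries Unit K), X ()]) h'
  rw [subst_mul (hs_of cv), subst_add (hs_of cv), subst_mul (hs_of cv), subst_sub (hs_of cv),
    comp_subst1 (fun _ => cD) cv, comp_subst1 (fun _ => ccX _) cv] at h2
  simp only [subst_mul (hs_of cv), subst_sub (hs_of cv), sX cv, Matrix.cons_val_zero, 
    Matrix.cons_val_one, sub_self, zero_mul, zero_add] at h2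
  have e1 : subst (fun _ : Unit => (X () : MvPowerSeries Unit K)) (pderiv K () L) 
    = pderiv K () L := congrFun (subst_self (σ := Unit) (R := K)) _
  have e2 : subst (fun _ : Unit => (0 : MvPowerSeries Unit K)) (pderiv K () L) = 1 := by
    have := subst_zero_eq_C_constantCoeff (σ := Unit) (τ := Unit) (R := K) (S := K) (f := pderiv K () L)
    rw [hL1] at this
    exact this.trans (map_one _)
  rw [e1, e2, one_mul] at h2
  exact h2

theorem odd_coeff_iff [IsAddTorsionFree K] {L : PowerSeries K} (h0 : constantCoeff L = 0) :
    subst (fun _ : Unit => -(X () : MvPowerSeries Unit K)) L = -L ↔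
      ∀ n, Odd n → PowerSeries.coeff n (pderiv K () L : PowerSeries K) = 0 := by
  have e : subst (fun _ : Unit => -(X () : MvPowerSeries Unit K)) L 
      = PowerSeries.rescale (-1 : K) L := by
    rw [PowerSeries.rescale_eq_subst, neg_one_smul]; rfl
  have e2 : ∀ n, PowerSeries.coeff n (pderiv K () L : PowerSeries K) 
      = PowerSeries.coeff (n + 1) L * (n + 1) := fun n => PowerSeries.coeff_derivative L n
  rw [e]
  constructor
  · intro h n hn
    have := congrArg (PowerSeries.coeff (n + 1)) h
    rw [PowerSeries.coeff_rescale, (hn.add_one).neg_one_pow, one_mul, map_neg] at this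
    rw [e2, self_eq_neg.1 this, zero_mul]
  · intro h
    ext n
    rw [PowerSeries.coeff_rescale, map_neg]
    rcases Nat.even_or_odd n with hn | hn
    · have : PowerSeries.coeff n L = 0 := by
        rcases n with _ | m
        · rw [PowerSeries.coeff_zero_eq_constantCoeff_apply]; exact h0
        · have h3 := h m (by simpa [Nat.even_add_one] using hn)
          rw [e2] at h3
          have : (m + 1) • PowerSeries.coeff (m + 1) L = 0 := by
            rw [nsmul_eq_mul, mul_comm]; exact_mod_cast h3
          exact (smul_eq_zero_iff_right (by omega)).1 this
      simp [this]
    · rw [hn.neg_one_pow, neg_one_mul]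

end FG

end helpers

open TensorProduct in
theorem stmt4 {A : Type*} [CommRing A] [NoZeroSMulDivisors ℤ A]
    (F : MvPowerSeries (Fin 2) A) (hF : IsFormalGroupLaw F)
    (ι : PowerSeries A) (hι0 : PowerSeries.constantCoeff ι = 0)
    (hι : psSubst ![PowerSeries.X, ι] F = 0)
    (q : MvPowerSeries (Fin 2) A)
    (hq : formalDiff F ι = ((X 0 : MvPowerSeries (Fin 2) A) - X 1) * q) :
    -- (i) ↔ (ii)
    ((swapPS q = q) ↔
      (∀ n : ℕ, Odd n →
        PowerSeries.coeff n (psSubst ![(PowerSeries.X : PowerSeries A), PowerSeries.X] q) = 0)) ∧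
    -- (i) ↔ (iii)
    ((swapPS q = q) ↔
      (∀ L : PowerSeries (ℚ ⊗[ℤ] A),
        (PowerSeries.X : PowerSeries (ℚ ⊗[ℤ] A)) ^ 2 ∣ L - PowerSeries.X →
        psSubst (fun _ : Unit =>
            MvPowerSeries.map
              (Algebra.TensorProduct.includeRight : A →ₐ[ℤ] ℚ ⊗[ℤ] A).toRingHom F) L =
          psSubst (fun _ : Unit => (X 0 : MvPowerSeries (Fin 2) (ℚ ⊗[ℤ] A))) L +
          psSubst (fun _ : Unit => (X 1 : MvPowerSeries (Fin 2) (ℚ ⊗[ℤ] A))) L →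
        psSubst (fun _ : Unit => -(PowerSeries.X : PowerSeries (ℚ ⊗[ℤ] A))) L = -L)) := by
  set φ := (Algebra.TensorProduct.includeRight : A →ₐ[ℤ] ℚ ⊗[ℤ] A).toRingHom with hφ
  have hinj : Function.Injective φ :=
    Algebra.TensorProduct.includeRight_injective (algebraMap ℤ ℚ).injective_int
  have hF := FG.of hF
  have hFK := hF.map φ
  have tf : IsAddTorsionFree (ℚ ⊗[ℤ] A) := IsAddTorsionFree.of_module_rat _
  have minj : ∀ {τ : Type} (f : MvPowerSeries τ A), map φ f = 0 → f = 0 := by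
    intro τ f hf
    ext e
    apply hinj
    rw [← coeff_map, hf]
    simp
  replace hι0 : MvPowerSeries.constantCoeff ι = 0 := hι0
  have hι : subst ![X (), ι] F = 0 := by
    rw [← psSubst_eq (cc2 (ccX _) hι0)]; exact hι
  have c1 : constantCoeff (subst (fun _ : Unit => (X 1 : MvPowerSeries (Fin 2) A)) ι) = 0 :=
    cc_subst (fun _ => ccX _) hι0
  rw [formalDiff, psSubst_eq (fun _ => ccX _), psSubst_eq (cc2 (ccX _) c1)] at hq
  have hqK := congrArg (map φ) hq
  rw [map_subst2 φ (ccX _) c1, map_subst (hs_of fun _ => ccX _)] at hqK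
  simp only [map_mul, map_sub, map_X] at hqK
  have n0 : constantCoeff (-X () : MvPowerSeries Unit A) = 0 := by simp
  have main : swapPS q = q ↔ subst ![(X () : MvPowerSeries Unit (ℚ ⊗[ℤ] A)), - X ()] (map φ F) = 0 := by
    rw [swapPS_eq, hF.symm_iff hι0 hι hq]
    have e : subst ![(X () : MvPowerSeries Unit (ℚ ⊗[ℤ] A)), - X ()] (map φ F)
        = map φ (subst ![X (), - X ()] F) := by
      rw [map_subst2 φ (ccX _) n0, map_neg, map_X]
    rw [e]
    constructor
    · rintro rfl
      rw [hι, map_zero]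
    · intro h
      exact hF.cancel (ccX _) hι0 n0 hι (minj _ h)
  obtain ⟨L, hL0, hL1, hL⟩ := hFK.exists_log
  have hX : (X () : MvPowerSeries Unit (ℚ ⊗[ℤ] A)) ^ 2 ∣ L - X () := by
    change (PowerSeries.X : PowerSeries (ℚ ⊗[ℤ] A)) ^ 2 ∣ L - PowerSeries.X
    rw [PowerSeries.X_pow_dvd_iff]
    intro m hm
    have h1 : PowerSeries.coeff 1 L = 1 := by
      have h := PowerSeries.coeff_derivative L 0
      have h' : PowerSeries.coeff 0 (PowerSeries.derivative _ L) = 1 := by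
        rw [PowerSeries.coeff_zero_eq_constantCoeff_apply]; exact hL1
      rw [h'] at h
      simpa using h.symm
    have h0 : PowerSeries.constantCoeff L = 0 := hL0
    interval_cases m
    · simp [h0]
    · simp [h1]
  have nK : constantCoeff (-X () : MvPowerSeries Unit (ℚ ⊗[ℤ] A)) = 0 := by simp
  refine ⟨?_, ?_⟩
  · rw [main, ← hFK.odd_iff hX hL, FG.odd_coeff_iff hL0,
      ← hFK.diag hL1 hL (ι := map φ ι) (by simp [hι0]) hqK]
    refine forall_congr' fun n => forall_congr' fun _ => ?_
    have e : subst ![(X () : MvPowerSeries Unit (ℚ ⊗[ℤ] A)), X ()] (map φ q)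
        = map φ (subst ![X (), X ()] q) := by
      rw [map_subst2 φ (ccX _) (ccX _), map_X]
    have e' : psSubst ![(PowerSeries.X : PowerSeries A), PowerSeries.X] q
        = subst ![(X () : MvPowerSeries Unit A), X ()] q := psSubst_eq (cc2 (ccX _) (ccX _)) q
    rw [e, e']
    change φ _ = 0 ↔ _
    exact map_eq_zero_iff φ hinj
  · rw [main]
    have odd' : ∀ L : PowerSeries (ℚ ⊗[ℤ] A), 
        psSubst (fun _ : Unit => -(PowerSeries.X : PowerSeries (ℚ ⊗[ℤ] A))) L
          = subst (fun _ : Unit => -(X () : MvPowerSeries Unit (ℚ ⊗[ℤ] A))) L := 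
      fun L => psSubst_eq (fun _ => nK) L
    constructor
    · intro h L hX hL
      rw [psSubst_eq (fun _ => hFK.c0), psSubst_eq (fun _ => ccX _),
        psSubst_eq (fun _ => ccX _)] at hL
      rw [odd']
      exact (hFK.odd_iff hX hL).2 h
    · intro h
      refine (hFK.odd_iff hX hL).1 ?_
      rw [← odd']
      refine h L hX ?_
      rw [psSubst_eq (fun _ => hFK.c0), psSubst_eq (fun _ => ccX _),
        psSubst_eq (fun _ => ccX _)]
      exact hL
end
end

section
/- Let F be a formal group law over a commutative ring R, and consider the ring of R-linear endomorphisms of R⟦x₁,…,x_n⟧. The R-subalgebra generated by all multiplication operators (multiplication by elements of R⟦x₁,…,x_n⟧) together with the generalized divided difference operators A_{α_i} for the simple roots α_i = (i,i+1), 1 ≤ i < n, is identically equal to the R-subalgebra generated by all multiplication operators together with the classical divided difference operators D_{α_i} (the completed affine nilHecke algebra). -/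
noncomputable section
open MvPowerSeries

variable {k : Type*} [CommRing k]

/-- The automorphism of `k⟦x₁,…⟧` induced by a permutation of the variables. -/
def renamePS {σ : Type*} (e : Equiv.Perm σ) (f : MvPowerSeries σ k) : MvPowerSeries σ k :=
  fun d => MvPowerSeries.coeff (Finsupp.equivMapDomain e d) f

theorem X_sub_X_mul_eq_zero {σ : Type*} (i j : σ) (hij : i ≠ j) (g : MvPowerSeries σ k)
    (h : ((X i : MvPowerSeries σ k) - X j) * g = 0) : g = 0 := by
  classical
  have h1 : (X i : MvPowerSeries σ k) * g = X j * g := by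
    rw [sub_mul] at h; exact sub_eq_zero.mp h
  have key : ∀ (m : ℕ) (d : σ →₀ ℕ), d j = m → coeff d g = 0 := by
    intro m
    induction m with
    | zero =>
      intro d hd
      have h2 := congrArg (coeff (Finsupp.single i 1 + d)) h1
      rw [X_def, coeff_add_monomial_mul, X_def, coeff_monomial_mul, one_mul, if_neg] at h2
      · exact h2
      · intro hle
        have := hle j
        simp [hd, hij] at this
    | succ m ih =>
      intro d hd
      have h2 := congrArg (coeff (Finsupp.single i 1 + d)) h1
      rw [X_def, coeff_add_monomial_mul, X_def, coeff_monomial_mul, one_mul] at h2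
      rw [h2]
      split_ifs
      · rw [ih _ (by simp [hd, hij]), mul_zero]
      · rfl
  ext d
  simpa using key _ d rfl

theorem X_sub_X_cancel {σ : Type*} (i j : σ) (hij : i ≠ j) (f g : MvPowerSeries σ k)
    (h : ((X i : MvPowerSeries σ k) - X j) * f = (X i - X j) * g) : f = g := by
  apply sub_eq_zero.mp
  apply X_sub_X_mul_eq_zero i j hij
  rw [mul_sub, h, sub_self]

theorem isUnit_psSubst {σ τ : Type*} [Fintype σ] [DecidableEq σ]
    (a : σ → MvPowerSeries τ k) (f : MvPowerSeries σ k) (hf : IsUnit f) :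
    IsUnit (psSubst a f) := by
  rw [MvPowerSeries.isUnit_iff_constantCoeff] at hf ⊢
  have : constantCoeff (psSubst a f) = constantCoeff f := by
    rw [← coeff_zero_eq_constantCoeff_apply, ← coeff_zero_eq_constantCoeff_apply]
    have h0 : (Finsupp.equivFunOnFinite.symm fun _ : σ =>
        (0 : τ →₀ ℕ).sum fun _ m => m) = (0 : σ →₀ ℕ) := by
      ext s; simp
    have h1 : Finset.Iic (0 : σ →₀ ℕ) = {0} := by
      ext d; simp
    change (∑ d ∈ Finset.Iic (Finsupp.equivFunOnFinite.symm fun _ : σ =>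
        (0 : τ →₀ ℕ).sum fun _ m => m), _) = _
    rw [h0, h1]
    simp
  rwa [this]

theorem stmt8 (F : MvPowerSeries (Fin 2) k) (hF : IsFormalGroupLaw F)
    (ι : PowerSeries k) (hι0 : PowerSeries.constantCoeff ι = 0)
    (hι : psSubst ![PowerSeries.X, ι] F = 0)
    (q p : MvPowerSeries (Fin 2) k)
    (hq : formalDiff F ι = ((X 0 : MvPowerSeries (Fin 2) k) - X 1) * q)
    (hp : p * q = 1)
    (n : ℕ)
    (A D : ℕ → Module.End k (MvPowerSeries (Fin n) k))
    -- `A i` is the generalized divided difference operator for the simple root `(i, i+1)`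
    (hA : ∀ (i : ℕ) (hi : i + 1 < n) (f : MvPowerSeries (Fin n) k),
      ((X (⟨i, Nat.lt_of_succ_lt hi⟩ : Fin n) : MvPowerSeries (Fin n) k) - X ⟨i + 1, hi⟩) *
          (A i f) =
        psSubst ![(X (⟨i, Nat.lt_of_succ_lt hi⟩ : Fin n) : MvPowerSeries (Fin n) k),
            X ⟨i + 1, hi⟩] p * f -
          renamePS (Equiv.swap ⟨i, Nat.lt_of_succ_lt hi⟩ ⟨i + 1, hi⟩)
            (psSubst ![(X (⟨i, Nat.lt_of_succ_lt hi⟩ : Fin n) : MvPowerSeries (Fin n) k),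
                X ⟨i + 1, hi⟩] p * f))
    -- `D i` is the classical divided difference operator for the simple root `(i, i+1)`
    (hD : ∀ (i : ℕ) (hi : i + 1 < n) (f : MvPowerSeries (Fin n) k),
      ((X (⟨i, Nat.lt_of_succ_lt hi⟩ : Fin n) : MvPowerSeries (Fin n) k) - X ⟨i + 1, hi⟩) *
          (D i f) =
        f - renamePS (Equiv.swap ⟨i, Nat.lt_of_succ_lt hi⟩ ⟨i + 1, hi⟩) f) :
    -- the algebra generated by multiplication operators and the `A i` equals
    -- the algebra generated by multiplication operators and the `D i`
    Algebra.adjoin k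
        ((Set.range fun g : MvPowerSeries (Fin n) k =>
            (LinearMap.mulLeft k g : Module.End k (MvPowerSeries (Fin n) k))) ∪
          {T | ∃ i : ℕ, i + 1 < n ∧ T = A i}) =
      Algebra.adjoin k
        ((Set.range fun g : MvPowerSeries (Fin n) k =>
            (LinearMap.mulLeft k g : Module.End k (MvPowerSeries (Fin n) k))) ∪
          {T | ∃ i : ℕ, i + 1 < n ∧ T = D i}) := by
  have hpu : IsUnit p := IsUnit.of_mul_eq_one q hp
  have hne : ∀ (i : ℕ) (hi : i + 1 < n),
      (⟨i, Nat.lt_of_succ_lt hi⟩ : Fin n) ≠ ⟨i + 1, hi⟩ := by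
    intro i hi h
    simp at h
  have hAD : ∀ (i : ℕ) (hi : i + 1 < n), ∃ P Q : MvPowerSeries (Fin n) k,
      A i = D i * LinearMap.mulLeft k P ∧ D i = A i * LinearMap.mulLeft k Q := by
    intro i hi
    obtain ⟨Q, hQ⟩ := (isUnit_psSubst
      ![(X (⟨i, Nat.lt_of_succ_lt hi⟩ : Fin n) : MvPowerSeries (Fin n) k), X ⟨i + 1, hi⟩]
      p hpu).exists_right_inv
    refine ⟨psSubst
        ![(X (⟨i, Nat.lt_of_succ_lt hi⟩ : Fin n) : MvPowerSeries (Fin n) k), X ⟨i + 1, hi⟩] p,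
      Q, ?_, ?_⟩
    · refine LinearMap.ext fun f => X_sub_X_cancel _ _ (hne i hi) _ _ ?_
      rw [hA i hi f, Module.End.mul_apply, hD i hi, LinearMap.mulLeft_apply]
    · refine LinearMap.ext fun f => X_sub_X_cancel _ _ (hne i hi) _ _ ?_
      rw [hD i hi f, Module.End.mul_apply, hA i hi, LinearMap.mulLeft_apply,
        ← mul_assoc, hQ, one_mul]
  apply le_antisymm
  · refine Algebra.adjoin_le ?_
    rintro T (hT | ⟨i, hi, rfl⟩)
    · exact Algebra.subset_adjoin (Or.inl hT)
    · obtain ⟨P, Q, h1, -⟩ := hAD i hi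
      rw [h1]
      exact mul_mem (Algebra.subset_adjoin (Or.inr ⟨i, hi, rfl⟩))
        (Algebra.subset_adjoin (Or.inl ⟨P, rfl⟩))
  · refine Algebra.adjoin_le ?_
    rintro T (hT | ⟨i, hi, rfl⟩)
    · exact Algebra.subset_adjoin (Or.inl hT)
    · obtain ⟨P, Q, -, h2⟩ := hAD i hi
      rw [h2]
      exact mul_mem (Algebra.subset_adjoin (Or.inr ⟨i, hi, rfl⟩))
        (Algebra.subset_adjoin (Or.inl ⟨Q, rfl⟩))
end
end
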